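/- arXiv:0905.2011 — 6 statements merged into one kernel-verified Lean document; each statement's English description precedes it below -/
import Mathlib

section
/- Let p be a prime, K a field of characteristic p, n ≥ 1 an integer, and W a finite-dimensional K-vector space. Suppose that for each integer ℓ with 0 ≤ ℓ ≤ n(p−1) we are given a K-subspace F_ℓ ⊆ W ⊗_K R^ℓ such that for all 1 ≤ ℓ ≤ n(p−1) and all 1 ≤ i ≤ n the map id_W ⊗ ∂/∂x_i sends F_ℓ into F_{ℓ−1}. Then there exists a K-subspace W' ⊆ W such that F_{n(p−1)} = W' ⊗_K R^{n(p−1)} and W' ⊗_K R^ℓ ⊆ F_ℓ for every 0 ≤ ℓ ≤ n(p−1). -/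
open MvPolynomial TensorProduct

/-- `R^ℓ`: the `K`-span of monomials `x₁^{k₁} ⋯ xₙ^{kₙ}` with `∑ kᵢ = ℓ` and `0 ≤ kᵢ ≤ p-1`. -/
noncomputable def Rsub (K : Type*) [Field K] (p n ℓ : ℕ) :
    Submodule K (MvPolynomial (Fin n) K) :=
  Submodule.span K { q | ∃ k : Fin n →₀ ℕ, (∀ i, k i ≤ p - 1) ∧ (∑ i, k i) = ℓ ∧
    q = monomial k 1 }

/-- `W ⊗_K R^ℓ` viewed as a subspace of `W ⊗_K K[x₁,…,xₙ]`. -/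
noncomputable def WR (K W : Type*) [Field K] [AddCommGroup W] [Module K W] (p n ℓ : ℕ) :
    Submodule K (W ⊗[K] MvPolynomial (Fin n) K) :=
  LinearMap.range (LinearMap.lTensor W (Rsub K p n ℓ).subtype)

theorem aux_le {K W : Type*} [Field K] [AddCommGroup W] [Module K W] (p n l : ℕ)
    (W' : Submodule K W) (G : Submodule K (W ⊗[K] MvPolynomial (Fin n) K))
    (h : ∀ w ∈ W', ∀ k : Fin n →₀ ℕ, (∀ i, k i ≤ p - 1) → (∑ i, k i) = l →
      w ⊗ₜ[K] (monomial k (1 : K)) ∈ G) :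
    LinearMap.range (TensorProduct.map W'.subtype (Rsub K p n l).subtype) ≤ G := by
  rintro _ ⟨x, rfl⟩
  induction x using TensorProduct.induction_on with
  | zero => simp
  | add x y hx hy => rw [map_add]; exact G.add_mem hx hy
  | tmul w r =>
    obtain ⟨w, hw⟩ := w
    obtain ⟨r, hr⟩ := r
    have key : Rsub K p n l ≤ G.comap (TensorProduct.mk K W (MvPolynomial (Fin n) K) w) := by
      refine Submodule.span_le.2 ?_
      rintro _ ⟨k, h1, h2, rfl⟩
      exact h w hw k h1 h2
    exact key hr

theorem stmt0 (p : ℕ) (hp : p.Prime) (n : ℕ) (hn : 1 ≤ n)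
    (K : Type*) [Field K] [CharP K p]
    (W : Type*) [AddCommGroup W] [Module K W] [FiniteDimensional K W]
    (F : ℕ → Submodule K (W ⊗[K] MvPolynomial (Fin n) K))
    (hF : ∀ ℓ ≤ n * (p - 1), F ℓ ≤ WR K W p n ℓ)
    (hD : ∀ ℓ, 1 ≤ ℓ → ℓ ≤ n * (p - 1) → ∀ i : Fin n,
      Submodule.map (LinearMap.lTensor W (pderiv i).toLinearMap) (F ℓ) ≤ F (ℓ - 1)) :
    ∃ W' : Submodule K W,
      F (n * (p - 1))
        = LinearMap.range (TensorProduct.map W'.subtype (Rsub K p n (n * (p - 1))).subtype)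
      ∧ ∀ ℓ ≤ n * (p - 1),
          LinearMap.range (TensorProduct.map W'.subtype (Rsub K p n ℓ).subtype) ≤ F ℓ := by
  have htop : ∀ k : Fin n →₀ ℕ, (∀ i, k i ≤ p - 1) → (∑ i, k i) = n * (p - 1) →
      ∀ i, k i = p - 1 := by
    intro k h1 h2 i
    have h3 : ∑ i, k i = ∑ _i : Fin n, (p - 1) := by simp [h2]
    exact (Finset.sum_eq_sum_iff_of_le (fun i _ => h1 i)).1 h3 i (Finset.mem_univ i)
  let T : Fin n →₀ ℕ := Finsupp.equivFunOnFinite.symm (fun _ => p - 1)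
  have hT : ∀ i, T i = p - 1 := fun i => rfl
  let φ : W →ₗ[K] W ⊗[K] MvPolynomial (Fin n) K :=
    (TensorProduct.mk K W (MvPolynomial (Fin n) K)).flip (monomial T 1)
  have hφ : ∀ w, φ w = w ⊗ₜ[K] (monomial T (1 : K)) := fun w => rfl
  have hle : ∀ d l, l + d = n * (p - 1) → ∀ w ∈ (F (n * (p - 1))).comap φ,
      ∀ k : Fin n →₀ ℕ, (∀ i, k i ≤ p - 1) → (∑ i, k i) = l →
      w ⊗ₜ[K] (monomial k (1 : K)) ∈ F l := by
    intro d
    induction d with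
    | zero =>
      intro l hl w hw k h1 h2
      have hl' : l = n * (p - 1) := by omega
      subst hl'
      have hk : k = T := Finsupp.ext (htop k h1 h2)
      subst hk
      exact hw
    | succ d ih =>
      intro l hl w hw k h1 h2
      obtain ⟨i, hi⟩ : ∃ i, k i < p - 1 := by
        by_contra! hcon
        have h3 : ∑ i, k i = ∑ _i : Fin n, (p - 1) :=
          Finset.sum_congr rfl (fun i _ => le_antisymm (h1 i) (hcon i))
        simp at h3
        omega
      have h4 := ih (l + 1) (by omega) w hw (k + Finsupp.single i 1)
        (by
          intro j
          by_cases hj : i = j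
          · subst hj; simp; omega
          · simp [Finsupp.single_apply, hj, h1 j])
        (by simp [Finset.sum_add_distrib, h2, Finsupp.single_apply])
      have h5 := hD (l + 1) (by omega) (by omega) i (Submodule.mem_map_of_mem h4)
      have hc : ((k i + 1 : ℕ) : K) ≠ 0 := by
        rw [Ne, CharP.cast_eq_zero_iff K p]
        intro hdvd
        have := Nat.le_of_dvd (by omega) hdvd
        omega
      have h6 : (LinearMap.lTensor W (pderiv i).toLinearMap)
          (w ⊗ₜ[K] (monomial (k + Finsupp.single i 1) (1 : K)))
          = ((k i + 1 : ℕ) : K) • (w ⊗ₜ[K] (monomial k (1 : K))) := by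
        rw [LinearMap.lTensor_tmul, ← TensorProduct.tmul_smul]
        congr 1
        change pderiv i _ = _
        rw [pderiv_monomial, smul_monomial]
        simp
      rw [h6] at h5
      exact (Submodule.smul_mem_iff _ hc).1 h5
  refine ⟨(F (n * (p - 1))).comap φ, le_antisymm ?_ ?_, ?_⟩
  · have h7 : WR K W p n (n * (p - 1)) ≤ LinearMap.range φ := by
      have h8 : WR K W p n (n * (p - 1)) ≤ LinearMap.range
          (TensorProduct.map (⊤ : Submodule K W).subtype
            (Rsub K p n (n * (p - 1))).subtype) := by
        rintro _ ⟨x, rfl⟩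
        induction x using TensorProduct.induction_on with
        | zero => simp
        | add x y hx hy => rw [map_add]; exact Submodule.add_mem _ hx hy
        | tmul w r => exact ⟨(⟨w, trivial⟩ : (⊤ : Submodule K W)) ⊗ₜ r, rfl⟩
      refine h8.trans (aux_le p n _ _ _ ?_)
      intro w _ k h1 h2
      have hk : k = T := Finsupp.ext (htop k h1 h2)
      exact ⟨w, by rw [hφ, hk]⟩
    intro x hx
    obtain ⟨w, rfl⟩ := h7 (hF _ le_rfl hx)
    have hTm : (monomial T (1 : K)) ∈ Rsub K p n (n * (p - 1)) :=
      Submodule.subset_span ⟨T, fun i => (hT i).le, by simp [hT], rfl⟩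
    exact ⟨(⟨w, hx⟩ : (F (n * (p - 1))).comap φ) ⊗ₜ ⟨_, hTm⟩, rfl⟩
  · exact aux_le p n _ _ _ (hle 0 _ (by omega))
  · intro l hl
    exact aux_le p n _ _ _ (hle (n * (p - 1) - l) l (by omega))
end

section
/- Let p be a prime, K a field of characteristic p, n ≥ 1 an integer, and W a finite-dimensional K-vector space. Suppose that for each integer ℓ with 0 ≤ ℓ ≤ n(p−1) we are given a K-subspace F_ℓ ⊆ W ⊗_K R^ℓ such that for all 1 ≤ ℓ ≤ n(p−1) and all 1 ≤ i ≤ n the map id_W ⊗ ∂/∂x_i sends F_ℓ into F_{ℓ−1}. Then for every 0 ≤ ℓ ≤ n(p−1) one has dim_K F_ℓ ≥ (dim_K F_{n(p−1)}) · (dim_K R^ℓ). -/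
open MvPolynomial TensorProduct

theorem aux_eq_top (n q : ℕ) (k : Fin n →₀ ℕ) (hk : ∀ i, k i ≤ q) (hs : (∑ i, k i) = n * q)
    (i : Fin n) : k i = q := by
  have h1 : (∑ i, k i) = ∑ _i : Fin n, q := by simp [hs]
  exact (Finset.sum_eq_sum_iff_of_le (fun i _ => hk i)).1 h1 i (Finset.mem_univ i)

theorem aux_fin (K : Type*) [Field K] (p n ℓ : ℕ) : FiniteDimensional K (Rsub K p n ℓ) := by
  unfold Rsub
  refine FiniteDimensional.span_of_finite K ?_
  have hfin : Set.Finite {k : Fin n →₀ ℕ | ∀ i, k i ≤ p - 1} := by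
    refine (Set.finite_Iic (Finsupp.equivFunOnFinite.symm (fun _ : Fin n => p - 1))).subset ?_
    intro k hk i
    simpa using hk i
  refine (hfin.image (fun k => monomial k (1 : K))).subset ?_
  rintro q ⟨k, hk, _, rfl⟩
  exact ⟨k, hk, rfl⟩

theorem stmt1 (p : ℕ) (hp : p.Prime) (n : ℕ) (hn : 1 ≤ n)
    (K : Type*) [Field K] [CharP K p]
    (W : Type*) [AddCommGroup W] [Module K W] [FiniteDimensional K W]
    (F : ℕ → Submodule K (W ⊗[K] MvPolynomial (Fin n) K))
    (hF : ∀ ℓ ≤ n * (p - 1), F ℓ ≤ WR K W p n ℓ)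
    (hD : ∀ ℓ, 1 ≤ ℓ → ℓ ≤ n * (p - 1) → ∀ i : Fin n,
      Submodule.map (LinearMap.lTensor W (pderiv i).toLinearMap) (F ℓ) ≤ F (ℓ - 1)) :
    ∀ ℓ ≤ n * (p - 1),
      Module.finrank K (F (n * (p - 1))) * Module.finrank K (Rsub K p n ℓ)
        ≤ Module.finrank K (F ℓ) := by
  have hfd : ∀ ℓ, FiniteDimensional K (Rsub K p n ℓ) := aux_fin K p n
  set t : Fin n →₀ ℕ := Finsupp.equivFunOnFinite.symm (fun _ : Fin n => p - 1) with ht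
  let φ : W →ₗ[K] W ⊗[K] MvPolynomial (Fin n) K :=
    (TensorProduct.mk K W (MvPolynomial (Fin n) K)).flip (monomial t 1)
  have hφ : ∀ w, φ w = w ⊗ₜ[K] (monomial t (1 : K)) := fun w => rfl
  have htop : ∀ k : Fin n →₀ ℕ, (∀ i, k i ≤ p - 1) → (∑ i, k i) = n * (p - 1) → k = t := by
    intro k hk hs
    ext i
    simpa [ht] using aux_eq_top n (p - 1) k hk hs i
  let V : Submodule K W := (F (n * (p - 1))).comap φ
  have hA : F (n * (p - 1)) ≤ V.map φ := by
    intro x hx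
    have h1 : WR K W p n (n * (p - 1)) ≤ LinearMap.range φ := by
      rintro _ ⟨y, rfl⟩
      induction y using TensorProduct.induction_on with
      | zero => simp
      | add a b ha hb => rw [map_add]; exact add_mem ha hb
      | tmul w r =>
        obtain ⟨r, hr⟩ := r
        have h2 : Rsub K p n (n * (p - 1)) ≤ Submodule.span K {monomial t (1 : K)} := by
          refine Submodule.span_mono ?_
          rintro q ⟨k, hk, hs, rfl⟩
          rw [htop k hk hs]; rfl
        obtain ⟨c, rfl⟩ := Submodule.mem_span_singleton.1 (h2 hr)
        refine ⟨c • w, ?_⟩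
        rw [map_smul, hφ, LinearMap.lTensor_tmul, Submodule.subtype_apply,
          TensorProduct.tmul_smul]
    obtain ⟨w, rfl⟩ := h1 (hF _ le_rfl hx)
    exact ⟨w, hx, rfl⟩
  have hB : ∀ d ℓ, ℓ + d = n * (p - 1) → ∀ k : Fin n →₀ ℕ, (∀ i, k i ≤ p - 1) →
      (∑ i, k i) = ℓ → ∀ w ∈ V, w ⊗ₜ[K] (monomial k (1 : K)) ∈ F ℓ := by
    intro d
    induction d with
    | zero =>
      intro ℓ hℓ k hk hs w hw
      simp only [add_zero] at hℓ
      subst hℓ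
      rw [htop k hk hs]
      exact hw
    | succ d ih =>
      intro ℓ hℓ k hk hs w hw
      obtain ⟨i, hi⟩ : ∃ i, k i < p - 1 := by
        by_contra hcon
        push Not at hcon
        have : (∑ i, k i) = ∑ _i : Fin n, (p - 1) :=
          Finset.sum_congr rfl (fun i _ => le_antisymm (hk i) (hcon i))
        simp at this
        omega
      have h1 := ih (ℓ + 1) (by omega) (k + Finsupp.single i 1)
        (by
          intro j
          by_cases h : i = j
          · subst h; simp; omega
          · simpa [Finsupp.single_apply, h] using hk j)
        (by simp [Finset.sum_add_distrib, hs, Finsupp.single_apply]) w hw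
      have h2 := hD (ℓ + 1) (by omega) (by omega) i ⟨_, h1, rfl⟩
      have h3 : (pderiv i) (monomial (k + Finsupp.single i 1) (1 : K)) =
          ((k i + 1 : ℕ) : K) • monomial k (1 : K) := by
        rw [pderiv_monomial, smul_monomial]
        simp
      have hne : ((k i + 1 : ℕ) : K) ≠ 0 := by
        intro h
        rw [CharP.cast_eq_zero_iff K p] at h
        have := Nat.le_of_dvd (by omega) h
        omega
      rw [LinearMap.lTensor_tmul] at h2
      change w ⊗ₜ[K] ((pderiv i) (monomial (k + Finsupp.single i 1) (1 : K))) ∈ F (ℓ + 1 - 1) at h2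
      rw [h3, TensorProduct.tmul_smul, Nat.add_sub_cancel] at h2
      exact (Submodule.smul_mem_iff _ hne).1 h2
  intro ℓ hℓ
  have hFfd : FiniteDimensional K (F ℓ) := by
    have : FiniteDimensional K (WR K W p n ℓ) := by unfold WR; infer_instance
    exact Submodule.finiteDimensional_of_le (hF ℓ hℓ)
  have hle : Module.finrank K (F (n * (p - 1))) ≤ Module.finrank K V :=
    (Submodule.finrank_mono hA).trans (Submodule.finrank_map_le φ V)
  let ψ := TensorProduct.map V.subtype (Rsub K p n ℓ).subtype
  have hinj : Function.Injective ψ :=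
    TensorProduct.map_injective_of_flat_flat _ _ V.injective_subtype
      (Rsub K p n ℓ).injective_subtype
  have hr : LinearMap.range ψ ≤ F ℓ := by
    rintro _ ⟨y, rfl⟩
    induction y using TensorProduct.induction_on with
    | zero => simp
    | add a b ha hb => rw [map_add]; exact add_mem ha hb
    | tmul w r =>
      obtain ⟨w, hw⟩ := w
      obtain ⟨r, hr⟩ := r
      change w ⊗ₜ[K] r ∈ F ℓ
      have h2 : Rsub K p n ℓ ≤ (F ℓ).comap (TensorProduct.mk K W (MvPolynomial (Fin n) K) w) := by
        refine Submodule.span_le.2 ?_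
        rintro q ⟨k, hk, hs, rfl⟩
        exact hB (n * (p - 1) - ℓ) ℓ (by omega) k hk hs w hw
      exact h2 hr
  calc _ ≤ Module.finrank K V * Module.finrank K (Rsub K p n ℓ) := Nat.mul_le_mul_right _ hle
    _ = Module.finrank K (V ⊗[K] Rsub K p n ℓ) := Module.finrank_tensorProduct.symm
    _ = Module.finrank K (LinearMap.range ψ) := (LinearMap.finrank_range_of_inj hinj).symm
    _ ≤ _ := Submodule.finrank_mono hr
end

section
/- Let p be a prime, K a field of characteristic p, n ≥ 1 an integer, and W a finite-dimensional K-vector space. Suppose that for each integer ℓ with 0 ≤ ℓ ≤ n(p−1) we are given a K-subspace F_ℓ ⊆ W ⊗_K R^ℓ such that for all 1 ≤ ℓ ≤ n(p−1) and all 1 ≤ i ≤ n the map id_W ⊗ ∂/∂x_i sends F_ℓ into F_{ℓ−1}. Then ∑_{ℓ=0}^{n(p−1)} dim_K F_ℓ ≥ p^n · dim_K F_{n(p−1)}. -/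
open MvPolynomial TensorProduct

theorem aux_mem (p : ℕ) (hp : p.Prime) (n : ℕ)
    (K : Type*) [Field K] [CharP K p]
    (W : Type*) [AddCommGroup W] [Module K W]
    (F : ℕ → Submodule K (W ⊗[K] MvPolynomial (Fin n) K))
    (hD : ∀ ℓ, 1 ≤ ℓ → ℓ ≤ n * (p - 1) → ∀ i : Fin n,
      Submodule.map (LinearMap.lTensor W (pderiv i).toLinearMap) (F ℓ) ≤ F (ℓ - 1))
    (top : Fin n →₀ ℕ) (htop : ∀ i, top i = p - 1) (w : W)
    (hw : w ⊗ₜ[K] (monomial top (1 : K)) ∈ F (n * (p - 1))) :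
    ∀ (d : ℕ) (k : Fin n →₀ ℕ), (∀ i, k i ≤ p - 1) → (∑ i, k i) + d = n * (p - 1) →
      w ⊗ₜ[K] (monomial k (1 : K)) ∈ F (∑ i, k i) := by
  intro d
  induction d with
  | zero =>
    intro k hk hs
    have hs' : ∑ i, k i = ∑ i : Fin n, (p - 1) := by simpa using hs
    have h2 := (Finset.sum_eq_sum_iff_of_le (fun i _ => hk i)).1 hs'
    have : k = top := by
      ext i
      rw [htop, h2 i (Finset.mem_univ _)]
    have hs3 : ∑ i, k i = n * (p - 1) := by simpa using hs
    rw [hs3, this]; exact hw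
  | succ d ih =>
    intro k hk hs
    have hex : ∃ i, k i < p - 1 := by
      by_contra! h
      have : ∑ i : Fin n, (p - 1) ≤ ∑ i, k i := Finset.sum_le_sum (fun i _ => h i)
      simp at this
      omega
    obtain ⟨i, hi⟩ := hex
    have hsum : ∑ j, (k + Finsupp.single i 1 : Fin n →₀ ℕ) j = ∑ j, k j + 1 := by
      simp [Finset.sum_add_distrib, Finsupp.single_apply]
    have h1 := ih (k + Finsupp.single i 1) (by
      intro j
      by_cases hj : i = j
      · subst hj; simp; omega
      · simp [Finsupp.single_apply, hj, hk j]) (by rw [hsum]; omega)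
    rw [hsum] at h1
    have h2 := hD (∑ j, k j + 1) (by omega) (by omega) i (Submodule.mem_map_of_mem h1)
    have hne : ((k i + 1 : ℕ) : K) ≠ 0 := by
      rw [Ne, CharP.cast_eq_zero_iff K p]
      intro h
      have := Nat.le_of_dvd (by omega) h
      omega
    have h3 := (F (∑ j, k j)).smul_mem (((k i + 1 : ℕ) : K)⁻¹) h2
    convert h3 using 1
    rw [LinearMap.lTensor_tmul, ← TensorProduct.tmul_smul]
    congr 1
    change _ = _ • pderiv i (monomial (k + Finsupp.single i 1) (1 : K))
    rw [pderiv_monomial, smul_monomial]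
    rw [add_tsub_cancel_right]
    congr 1
    simp only [Finsupp.add_apply, Finsupp.single_eq_same, smul_eq_mul, one_mul]
    rw [inv_mul_cancel₀ hne]

/-- Coefficient extraction. -/
noncomputable def coefW (n : ℕ) (K : Type*) [Field K] (W : Type*) [AddCommGroup W] [Module K W]
    (k : Fin n →₀ ℕ) : W ⊗[K] MvPolynomial (Fin n) K →ₗ[K] W :=
  (TensorProduct.rid K W).toLinearMap ∘ₗ LinearMap.lTensor W (lcoeff K k)

theorem coefW_tmul (n : ℕ) (K : Type*) [Field K] (W : Type*) [AddCommGroup W] [Module K W]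
    (k : Fin n →₀ ℕ) (w : W) (q : MvPolynomial (Fin n) K) :
    coefW n K W k (w ⊗ₜ q) = coeff k q • w := by
  simp [coefW]

theorem WR_fd (K W : Type*) [Field K] [AddCommGroup W] [Module K W] [FiniteDimensional K W]
    (p n ℓ : ℕ) : FiniteDimensional K (WR K W p n ℓ) := by
  have : FiniteDimensional K (Rsub K p n ℓ) := by
    apply FiniteDimensional.span_of_finite
    have hf : Set.Finite {k : Fin n →₀ ℕ | ∀ i, k i ≤ p - 1} := by
      refine (Set.finite_Iic (Finsupp.equivFunOnFinite.symm (fun _ : Fin n => p - 1))).subset ?_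
      intro k hk i
      simpa using hk i
    refine (hf.image (fun k => monomial k (1 : K))).subset ?_
    rintro q ⟨k, hk, -, rfl⟩
    exact ⟨k, hk, rfl⟩
  unfold WR
  infer_instance

theorem WR_top (p n : ℕ) (K W : Type*) [Field K] [AddCommGroup W] [Module K W]
    (top : Fin n →₀ ℕ) (htop : ∀ i, top i = p - 1) :
    WR K W p n (n * (p - 1)) ≤
      LinearMap.range ((TensorProduct.mk K W (MvPolynomial (Fin n) K)).flip (monomial top 1)) := by
  rintro _ ⟨x, rfl⟩
  induction x using TensorProduct.induction_on with
  | zero => simp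
  | add x y hx hy => rw [map_add]; exact Submodule.add_mem _ hx hy
  | tmul w q =>
    obtain ⟨q, hq⟩ := q
    have : q ∈ Submodule.span K {monomial top (1 : K)} := by
      refine Submodule.span_mono ?_ hq
      rintro _ ⟨k, hk, hs, rfl⟩
      have hs' : ∑ i, k i = ∑ i : Fin n, (p - 1) := by simpa using hs
      have h2 := (Finset.sum_eq_sum_iff_of_le (fun i _ => hk i)).1 hs'
      have : k = top := by
        ext i
        rw [htop, h2 i (Finset.mem_univ _)]
      simp [this]
    obtain ⟨c, rfl⟩ := Submodule.mem_span_singleton.1 this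
    refine ⟨c • w, ?_⟩
    simp only [LinearMap.flip_apply, TensorProduct.mk_apply, LinearMap.lTensor_tmul,
      Submodule.subtype_apply]
    rw [TensorProduct.smul_tmul]

theorem stmt2 (p : ℕ) (hp : p.Prime) (n : ℕ) (hn : 1 ≤ n)
    (K : Type*) [Field K] [CharP K p]
    (W : Type*) [AddCommGroup W] [Module K W] [FiniteDimensional K W]
    (F : ℕ → Submodule K (W ⊗[K] MvPolynomial (Fin n) K))
    (hF : ∀ ℓ ≤ n * (p - 1), F ℓ ≤ WR K W p n ℓ)
    (hD : ∀ ℓ, 1 ≤ ℓ → ℓ ≤ n * (p - 1) → ∀ i : Fin n,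
      Submodule.map (LinearMap.lTensor W (pderiv i).toLinearMap) (F ℓ) ≤ F (ℓ - 1)) :
    p ^ n * Module.finrank K (F (n * (p - 1)))
      ≤ ∑ ℓ ∈ Finset.range (n * (p - 1) + 1), Module.finrank K (F ℓ) := by
  classical
  have hp2 := hp.two_le
  set top : Fin n →₀ ℕ := Finsupp.equivFunOnFinite.symm (fun _ => p - 1) with htopdef
  have htop : ∀ i, top i = p - 1 := fun i => by simp [htopdef]
  set m := (TensorProduct.mk K W (MvPolynomial (Fin n) K)).flip (monomial top 1) with hm
  set V : Submodule K W := (F (n * (p - 1))).comap m with hV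
  have hVr : Module.finrank K (F (n * (p - 1))) ≤ Module.finrank K V := by
    have : F (n * (p - 1)) = V.map m := by
      rw [hV, Submodule.map_comap_eq, inf_eq_right.2]
      exact (hF _ le_rfl).trans (WR_top p n K W top htop)
    rw [this]
    exact Submodule.finrank_map_le m V
  let e : (Fin n → Fin p) → (Fin n →₀ ℕ) := fun k =>
    Finsupp.equivFunOnFinite.symm (fun i => (k i : ℕ))
  have he : ∀ k i, e k i = k i := fun k i => by simp [e]
  have heinj : Function.Injective e := by
    intro a b h
    ext i
    rw [← he a, ← he b, h]
  have hle : ∀ k i, e k i ≤ p - 1 := fun k i => by rw [he]; have := (k i).2; omega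
  have hsle : ∀ k, ∑ i, e k i ≤ n * (p - 1) := fun k => by
    have : ∑ i, e k i ≤ ∑ i : Fin n, (p - 1) := Finset.sum_le_sum (fun i _ => hle k i)
    simpa using this
  have key : ∀ ℓ ∈ Finset.range (n * (p - 1) + 1),
      (Finset.univ.filter (fun k : Fin n → Fin p => ∑ i, e k i = ℓ)).card *
        Module.finrank K V ≤ Module.finrank K (F ℓ) := by
    intro ℓ hℓ
    have hℓ' : ℓ ≤ n * (p - 1) := by simpa [Nat.lt_succ_iff] using hℓ
    haveI := WR_fd K W p n ℓ
    haveI : FiniteDimensional K (F ℓ) := Submodule.finiteDimensional_of_le (hF ℓ hℓ')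
    let S := {k : Fin n → Fin p // ∑ i, e k i = ℓ}
    let φ : (S → V) →ₗ[K] W ⊗[K] MvPolynomial (Fin n) K :=
      ∑ s : S, ((TensorProduct.mk K W (MvPolynomial (Fin n) K)).flip (monomial (e s.1) 1)) ∘ₗ
        V.subtype ∘ₗ LinearMap.proj s
    have hφ : ∀ f, φ f = ∑ s : S, (f s : W) ⊗ₜ[K] (monomial (e s.1) (1 : K)) := by
      intro f; simp [φ]
    have hφm : ∀ f, φ f ∈ F ℓ := by
      intro f
      rw [hφ]
      refine Submodule.sum_mem _ fun s _ => ?_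
      have := aux_mem p hp n K W F hD top htop (f s : W) (f s).2 (n * (p - 1) - ℓ) (e s.1)
        (hle _) (by rw [s.2]; omega)
      rwa [s.2] at this
    have hinj : Function.Injective (φ.codRestrict (F ℓ) hφm) := by
      rw [← LinearMap.ker_eq_bot, LinearMap.ker_codRestrict, LinearMap.ker_eq_bot']
      intro f hf
      ext s
      have := congrArg (coefW n K W (e s.1)) hf
      rw [hφ, map_sum, map_zero, Finset.sum_eq_single s] at this
      · simpa [coefW_tmul] using this
      · intro t _ hts
        rw [coefW_tmul, coeff_monomial, if_neg, zero_smul]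
        exact fun h => hts (Subtype.ext (heinj h))
      · simp
    have h := LinearMap.finrank_le_finrank_of_injective hinj
    rw [Module.finrank_pi_fintype] at h
    simp only [Finset.sum_const, Finset.card_univ, smul_eq_mul] at h
    rwa [Fintype.card_subtype] at h
  calc p ^ n * Module.finrank K (F (n * (p - 1))) ≤ p ^ n * Module.finrank K V :=
        Nat.mul_le_mul_left _ hVr
    _ = (∑ ℓ ∈ Finset.range (n * (p - 1) + 1),
        (Finset.univ.filter (fun k : Fin n → Fin p => ∑ i, e k i = ℓ)).card) *
          Module.finrank K V := by
        rw [← Finset.card_eq_sum_card_fiberwise (s := Finset.univ)]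
        · simp
        · intro k _
          simpa [Nat.lt_succ_iff] using hsle k
    _ ≤ _ := by
        rw [Finset.sum_mul]
        exact Finset.sum_le_sum key
end

section
/- Let p be a prime, K a field of characteristic p, and n ≥ 1 an integer. For every integer ℓ with 0 ≤ ℓ ≤ n(p−1), the K-linear span of all ℓ-th order partial derivatives ∂^{a_1}/∂x_1^{a_1} ⋯ ∂^{a_n}/∂x_n^{a_n} (x_1⋯x_n)^{p−1}, taken over all multi-indices (a_1,…,a_n) of nonnegative integers with a_1+⋯+a_n = ℓ, is equal to R^{n(p−1)−ℓ}. -/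
open MvPolynomial

/-- The iterated partial derivative `∂^{a₁}/∂x₁^{a₁} ⋯ ∂^{aₙ}/∂xₙ^{aₙ}` as a `K`-linear
endomorphism of `K[x₁,…,xₙ]` (the individual partial derivatives commute). -/
noncomputable def iterPDeriv (K : Type*) [CommSemiring K] (n : ℕ) (a : Fin n → ℕ) :
    MvPolynomial (Fin n) K →ₗ[K] MvPolynomial (Fin n) K :=
  (List.ofFn fun i : Fin n => ((pderiv i : Derivation K _ _).toLinearMap ^ (a i))).prod

lemma pderiv_pow_mono {K : Type*} [Field K] {n : ℕ} (i : Fin n) (m : ℕ) (s : Fin n →₀ ℕ) (c : K) :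
    ((pderiv i : Derivation K (MvPolynomial (Fin n) K) _).toLinearMap ^ m) (monomial s c)
      = monomial (s - Finsupp.single i m) (c * ((s i).descFactorial m : ℕ)) := by
  induction m with
  | zero => simp
  | succ m ih =>
    rw [pow_succ', Module.End.mul_apply, ih]
    simp only [Derivation.coeFn_coe, pderiv_monomial]
    congr 1
    · rw [tsub_tsub, ← Finsupp.single_add]
    · simp [Nat.descFactorial_succ]
      ring

lemma list_mono {K : Type*} [Field K] {n : ℕ} (a : Fin n → ℕ) (s : Fin n →₀ ℕ) (l : List (Fin n))
    (hl : l.Nodup) :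
    (l.map fun i => ((pderiv i : Derivation K (MvPolynomial (Fin n) K) _).toLinearMap ^ (a i))).prod
      (monomial s 1)
      = monomial (s - Finsupp.equivFunOnFinite.symm (fun j => if j ∈ l then a j else 0))
        ((l.map fun i => (((s i).descFactorial (a i) : ℕ) : K)).prod) := by
  induction l with
  | nil =>
    simp only [List.map_nil, List.prod_nil, Module.End.one_apply]
    congr 2
    ext j
    simp
  | cons i l ih =>
    have hi := (List.nodup_cons.1 hl).1
    rw [List.map_cons, List.prod_cons, Module.End.mul_apply, ih (List.nodup_cons.1 hl).2,
      pderiv_pow_mono, List.map_cons, List.prod_cons]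
    congr 1
    · congr 1
      ext j
      by_cases h : j = i
      · subst h
        simp [hi]
      · simp [h, Finsupp.single_apply, Ne.symm h]
    · simp [hi, mul_comm]

lemma iter_top {K : Type*} [Field K] {n : ℕ} (p : ℕ) (a : Fin n → ℕ) :
    iterPDeriv K n a ((∏ i : Fin n, X i) ^ (p - 1)) =
      (∏ i, (((p - 1).descFactorial (a i) : ℕ) : K)) •
      monomial (Finsupp.equivFunOnFinite.symm (fun i => p - 1 - a i)) 1 := by
  have h : ((∏ i : Fin n, X i) ^ (p - 1) : MvPolynomial (Fin n) K)
      = monomial (Finsupp.equivFunOnFinite.symm (fun _ => p - 1)) 1 := by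
    rw [monomial_eq, Finsupp.prod_fintype _ _ (by simp)]
    simp [Finset.prod_pow]
  rw [h, iterPDeriv, List.ofFn_eq_map, list_mono _ _ _ (List.nodup_finRange n), smul_monomial]
  congr 1
  · congr 1
    ext j
    simp
  · rw [← List.ofFn_eq_map, List.prod_ofFn]
    simp

theorem stmt3 (p : ℕ) (hp : p.Prime) (n : ℕ) (hn : 1 ≤ n)
    (K : Type*) [Field K] [CharP K p] (ℓ : ℕ) (hℓ : ℓ ≤ n * (p - 1)) :
    Submodule.span K { q : MvPolynomial (Fin n) K | ∃ a : Fin n → ℕ, (∑ i, a i) = ℓ ∧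
        q = iterPDeriv K n a ((∏ i : Fin n, X i) ^ (p - 1)) }
      = Rsub K p n (n * (p - 1) - ℓ) := by
  apply le_antisymm
  · rw [Submodule.span_le]
    rintro q ⟨a, ha, rfl⟩
    rw [SetLike.mem_coe, iter_top]
    by_cases h : ∀ i, a i ≤ p - 1
    · apply Submodule.smul_mem
      apply Submodule.subset_span
      refine ⟨_, fun i => ?_, ?_, rfl⟩
      · simp
      · have h2 : ∑ i, (p - 1 - a i) + ∑ i, a i = n * (p - 1) := by
          rw [← Finset.sum_add_distrib, Finset.sum_congr rfl (fun i _ => Nat.sub_add_cancel (h i))]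
          simp
        simp only [Finsupp.equivFunOnFinite_symm_apply_apply]
        omega
    · push Not at h
      obtain ⟨i, hi⟩ := h
      rw [Finset.prod_eq_zero (Finset.mem_univ i), zero_smul]
      · exact Submodule.zero_mem _
      · rw [Nat.descFactorial_of_lt hi, Nat.cast_zero]
  · rw [Rsub, Submodule.span_le]
    rintro q ⟨k, hk, hs, rfl⟩
    have h2 : ∑ i, (p - 1 - k i) + ∑ i, k i = n * (p - 1) := by
      rw [← Finset.sum_add_distrib, Finset.sum_congr rfl (fun i _ => Nat.sub_add_cancel (hk i))]
      simp
    have hc : (∏ i, (((p - 1).descFactorial (p - 1 - k i) : ℕ) : K)) ≠ 0 := by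
      rw [Finset.prod_ne_zero_iff]
      intro i _ h0
      rw [CharP.cast_eq_zero_iff K p] at h0
      have h3 : p ∣ (p - 1).factorial := by
        rw [← Nat.factorial_mul_descFactorial (Nat.sub_le (p - 1) (k i))]
        exact Dvd.dvd.mul_left h0 _
      have := (hp.dvd_factorial).1 h3
      have := hp.pos
      omega
    rw [SetLike.mem_coe, ← Submodule.smul_mem_iff _ hc]
    apply Submodule.subset_span
    refine ⟨fun i => p - 1 - k i, by beta_reduce; omega, ?_⟩
    rw [iter_top]
    congr 3
    ext i
    have := hk i
    simp
    omega
end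

section
/- Let N be a natural number, m ≤ N a natural number, and r : ℕ → ℤ a function with r_ℓ = 0 for all ℓ > m. Then ∑_{ℓ=0}^{m} (N − 2ℓ) r_ℓ = ∑_{ℓ=m+1}^{N} (2ℓ − N) r_{N−ℓ} + ∑_{ℓ ≤ m, 2ℓ > N} (2ℓ − N)(r_{N−ℓ} − r_ℓ). -/
theorem stmt8 (N m : ℕ) (hm : m ≤ N) (r : ℕ → ℤ) (hr : ∀ ℓ, m < ℓ → r ℓ = 0) :
    ∑ ℓ ∈ Finset.range (m + 1), ((N : ℤ) - 2 * ℓ) * r ℓ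
      = ∑ ℓ ∈ Finset.Icc (m + 1) N, (2 * (ℓ : ℤ) - N) * r (N - ℓ)
        + ∑ ℓ ∈ (Finset.range (m + 1)).filter (fun ℓ => N < 2 * ℓ),
            (2 * (ℓ : ℤ) - N) * (r (N - ℓ) - r ℓ) := by
  have h1 : ∑ ℓ ∈ Finset.range (m + 1), ((N : ℤ) - 2 * ℓ) * r ℓ
      = ∑ ℓ ∈ Finset.range (N + 1), ((N : ℤ) - 2 * ℓ) * r ℓ := by
    apply Finset.sum_subset
    · intro x hx
      simp only [Finset.mem_range] at *
      omega
    · intro x _ hx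
      rw [hr x (by simp only [Finset.mem_range] at hx; omega), mul_zero]
  have h2 : ∑ ℓ ∈ Finset.range (N + 1), ((N : ℤ) - 2 * ℓ) * r ℓ
      = ∑ ℓ ∈ Finset.range (N + 1), (if 2 * ℓ < N then ((N : ℤ) - 2 * ℓ) * r ℓ else 0)
        + ∑ ℓ ∈ Finset.range (N + 1), (if N < 2 * ℓ then ((N : ℤ) - 2 * ℓ) * r ℓ else 0) := by
    rw [← Finset.sum_add_distrib]
    apply Finset.sum_congr rfl
    intro x _
    rcases lt_trichotomy (2 * x) N with h | h | h
    · rw [if_pos h, if_neg (by omega), add_zero]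
    · rw [if_neg (by omega), if_neg (by omega), ← h]
      push_cast
      ring
    · rw [if_neg (by omega), if_pos h, zero_add]
  have h3 : ∑ ℓ ∈ Finset.range (N + 1), (if 2 * ℓ < N then ((N : ℤ) - 2 * ℓ) * r ℓ else 0)
      = ∑ ℓ ∈ Finset.range (N + 1),
          (if N < 2 * ℓ then (2 * (ℓ : ℤ) - N) * r (N - ℓ) else 0) := by
    rw [← Finset.sum_range_reflect]
    apply Finset.sum_congr rfl
    intro x hx
    have hx : x ≤ N := by simp only [Finset.mem_range] at hx; omega
    rw [show N + 1 - 1 - x = N - x by omega]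
    by_cases h : N < 2 * x
    · rw [if_pos h, if_pos (by omega)]
      push_cast [hx]
      ring
    · rw [if_neg h, if_neg (by omega)]
  have h4 : Finset.Icc (m + 1) N = (Finset.range (N + 1)).filter (fun ℓ => m < ℓ) := by
    ext x
    simp only [Finset.mem_Icc, Finset.mem_filter, Finset.mem_range]
    omega
  have h5 : (Finset.range (m + 1)).filter (fun ℓ => N < 2 * ℓ)
      = (Finset.range (N + 1)).filter (fun ℓ => ℓ ≤ m ∧ N < 2 * ℓ) := by
    ext x
    simp only [Finset.mem_filter, Finset.mem_range]
    omega
  rw [h1, h2, h3, h4, h5, Finset.sum_filter, Finset.sum_filter, ← Finset.sum_add_distrib,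
    ← Finset.sum_add_distrib]
  apply Finset.sum_congr rfl
  intro x _
  by_cases hx : m < x
  · rw [if_pos hx, if_neg (by omega : ¬ (x ≤ m ∧ N < 2 * x)), hr x hx]
    by_cases h : N < 2 * x
    · simp [h]
    · rw [hr (N - x) (by omega)]
      simp
  · by_cases h : N < 2 * x
    · rw [if_neg hx, if_pos h, if_pos h, if_pos ⟨by omega, h⟩]
      ring
    · simp [h, hx]
end

section
/- Let p ≥ 3 be an integer, set N = 2p−2, and let m be a natural number with p−1 < m < N. Let r : ℕ → ℕ satisfy: r_ℓ ≥ 1 for all ℓ ≤ m; r_ℓ = 0 for all ℓ > m; and r_{N−ℓ} ≥ r_ℓ for every ℓ ≤ N with 2ℓ > N. If ∑_{ℓ=1}^{m} (p−1−ℓ) r_ℓ ≤ 1, then m + 1 > 2p − 3, i.e. m ≥ 2p−3. -/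
theorem stmt10 (p : ℕ) (hp : 3 ≤ p) (m : ℕ) (hm1 : p - 1 < m) (hm2 : m < 2 * p - 2)
    (r : ℕ → ℕ) (hpos : ∀ ℓ ≤ m, 1 ≤ r ℓ) (hzero : ∀ ℓ, m < ℓ → r ℓ = 0)
    (hsym : ∀ ℓ ≤ 2 * p - 2, 2 * p - 2 < 2 * ℓ → r ℓ ≤ r (2 * p - 2 - ℓ))
    (hS : ∑ ℓ ∈ Finset.Icc 1 m, ((p : ℤ) - 1 - ℓ) * r ℓ ≤ 1) :
    2 * p - 3 ≤ m := by
  by_contra! hlt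
  have h1 : ∑ ℓ ∈ Finset.Icc 1 m, ((p : ℤ) - 1 - ℓ) * r ℓ
      = ∑ ℓ ∈ Finset.Icc 1 (2 * p - 3), ((p : ℤ) - 1 - ℓ) * r ℓ := by
    apply Finset.sum_subset
    · intro x hx
      simp only [Finset.mem_Icc] at *
      omega
    · intro x hx hx'
      simp only [Finset.mem_Icc] at *
      rw [hzero x (by omega)]
      simp
  have h2 : ∑ ℓ ∈ Finset.Icc 1 (2 * p - 3), ((p : ℤ) - 1 - ℓ) * r ℓ
      = ∑ ℓ ∈ Finset.Icc 1 (2 * p - 3), -((p : ℤ) - 1 - ℓ) * r (2 * p - 2 - ℓ) := by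
    apply Finset.sum_nbij' (fun x => 2 * p - 2 - x) (fun x => 2 * p - 2 - x)
    · intro x hx
      simp only [Finset.mem_Icc] at *
      omega
    · intro x hx
      simp only [Finset.mem_Icc] at *
      omega
    · intro x hx
      simp only [Finset.mem_Icc] at *
      omega
    · intro x hx
      simp only [Finset.mem_Icc] at *
      omega
    · intro x hx
      simp only [Finset.mem_Icc] at *
      have e : 2 * p - 2 - (2 * p - 2 - x) = x := by omega
      have e2 : ((2 * p - 2 - x : ℕ) : ℤ) = 2 * p - 2 - x := by omega
      rw [e, e2]
      ring
  have h3 : ∑ ℓ ∈ ({1, 2 * p - 3} : Finset ℕ), ((p : ℤ) - 1 - ℓ) * ((r ℓ : ℤ) - r (2 * p - 2 - ℓ))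
      ≤ ∑ ℓ ∈ Finset.Icc 1 (2 * p - 3), ((p : ℤ) - 1 - ℓ) * ((r ℓ : ℤ) - r (2 * p - 2 - ℓ)) := by
    apply Finset.sum_le_sum_of_subset_of_nonneg
    · intro x hx
      simp only [Finset.mem_Icc, Finset.mem_insert, Finset.mem_singleton] at *
      omega
    · intro x hx _
      simp only [Finset.mem_Icc] at hx
      rcases lt_trichotomy x (p - 1) with h | h | h
      · have := hsym (2 * p - 2 - x) (by omega) (by omega)
        have e : 2 * p - 2 - (2 * p - 2 - x) = x := by omega
        rw [e] at this
        apply mul_nonneg <;> omega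
      · have e : (p : ℤ) - 1 - x = 0 := by omega
        simp [e]
      · have := hsym x (by omega) (by omega)
        apply mul_nonneg_of_nonpos_of_nonpos <;> omega
  rw [Finset.sum_pair (by omega)] at h3
  have e1 : 2 * p - 2 - 1 = 2 * p - 3 := by omega
  have e2 : 2 * p - 2 - (2 * p - 3) = 1 := by omega
  have e3 : ((2 * p - 3 : ℕ) : ℤ) = 2 * p - 3 := by omega
  have h4 : ∑ ℓ ∈ Finset.Icc 1 (2 * p - 3), ((p : ℤ) - 1 - ℓ) * ((r ℓ : ℤ) - r (2 * p - 2 - ℓ))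
      = ∑ ℓ ∈ Finset.Icc 1 (2 * p - 3), ((p : ℤ) - 1 - ℓ) * r ℓ
      + ∑ ℓ ∈ Finset.Icc 1 (2 * p - 3), -((p : ℤ) - 1 - ℓ) * r (2 * p - 2 - ℓ) := by
    rw [← Finset.sum_add_distrib]
    apply Finset.sum_congr rfl
    intros
    ring
  rw [h4, ← h2, ← h1, e1, e2, e3, hzero (2 * p - 3) hlt] at h3
  have := hpos 1 (by omega)
  have hp4 : (4 : ℤ) ≤ p := by omega
  have hr : (1 : ℤ) ≤ r 1 := by omega
  push_cast at h3
  nlinarith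
end
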